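/- arXiv:1210.7110 — 2 statements merged into one kernel-verified Lean document; each statement's English description precedes it below -/
import Mathlib

section
/- Let X, Y be smooth tangent vector fields on U (i.e. η*_p(X(p)) = η*_p(Y(p)) = 0 for all p) such that [X,Y] is also tangent (η*_p([X,Y](p)) = 0 for all p). Then the torsion of the projected covariant derivative satisfies, for all p ∈ U: ∇_X Y(p) − ∇_Y X(p) − [X,Y](p) = A(p)·(f¹_p(X(p))·f²_p(Y(p)) − f¹_p(Y(p))·f²_p(X(p)))·f₂(p); that is, T = A·f¹∧f² ⊗ f₂. -/
open Real MeasureTheory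

noncomputable section

/-- The Heisenberg group `ℍ¹` in exponential coordinates, as `ℝ³`. -/
abbrev H3 : Type := Fin 3 → ℝ

/-- Left invariant vector field `e₀`. -/
def E0 : H3 → H3 := fun _ => ![0, 0, 1]

/-- Left invariant vector field `e₁`. -/
def E1 : H3 → H3 := fun p => ![1, 0, -p 1 / 2]

/-- Left invariant vector field `e₂`. -/
def E2 : H3 → H3 := fun p => ![0, 1, p 0 / 2]

/-- Dual coframe element `e⁰` (the contact form). -/
def e0' (p v : H3) : ℝ := v 2 + (p 1 * v 0 - p 0 * v 1) / 2

/-- Dual coframe element `e¹`. -/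
def e1' (_p v : H3) : ℝ := v 0

/-- Dual coframe element `e²`. -/
def e2' (_p v : H3) : ℝ := v 1

/-- Lie bracket of vector fields on `ℝ³`. -/
def lie (V W : H3 → H3) (p : H3) : H3 :=
  fderiv ℝ W p (V p) - fderiv ℝ V p (W p)

/-- The adapted covariant derivative `∇̄_X Y`, for which the left invariant
frame `e₀, e₁, e₂` is parallel. -/
def nablaBar (X Y : H3 → H3) (p : H3) : H3 :=
  fderiv ℝ (fun q => e0' q (Y q)) p (X p) • E0 p
  + fderiv ℝ (fun q => Y q 0) p (X p) • E1 p
  + fderiv ℝ (fun q => Y q 1) p (X p) • E2 p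

/-- The horizontal normal `η = cos α · e₁ + sin α · e₂`. -/
def eta (α : H3 → ℝ) (p : H3) : H3 := cos (α p) • E1 p + sin (α p) • E2 p

/-- The characteristic field `f₁ = −sin α · e₁ + cos α · e₂`. -/
def F1 (α : H3 → ℝ) (p : H3) : H3 := (-sin (α p)) • E1 p + cos (α p) • E2 p

/-- The field `f₂ = e₀ + A·η`. -/
def F2 (α A : H3 → ℝ) (p : H3) : H3 := E0 p + A p • eta α p

/-- The horizontal conormal `η* = cos α · e¹ + sin α · e² − A·e⁰`. -/
def etaStar (α A : H3 → ℝ) (p v : H3) : ℝ :=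
  cos (α p) * e1' p v + sin (α p) * e2' p v - A p * e0' p v

/-- The 1-form `f¹ = −sin α · e¹ + cos α · e²`. -/
def f1' (α : H3 → ℝ) (p v : H3) : ℝ := -sin (α p) * e1' p v + cos (α p) * e2' p v

/-- The 1-form `f² = e⁰`. -/
def f2' (p v : H3) : ℝ := e0' p v

/-- The projected covariant derivative `∇_X Y = ∇̄_X Y − η*(∇̄_X Y)·η`. -/
def nablaP (α A : H3 → ℝ) (X Y : H3 → H3) (p : H3) : H3 :=
  nablaBar X Y p - etaStar α A p (nablaBar X Y p) • eta α p

/-!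
The adapted derivative `∇̄` differs from the flat one only in the `e₀` direction, where
differentiating the coefficients of `e⁰` contributes `-½ e¹ ∧ e²`; hence its torsion is
`-(e¹ ∧ e²) ⊗ e₀`. The projection along `η` onto `ker η*` turns `∇̄` into `∇` and `e₀` into `f₂`,
and the rotation by `α` gives `e¹ ∧ e² = (η* + A f²) ∧ f¹`, which is `-A f¹ ∧ f²` on tangent
vectors.
-/

/-- The value on `(v, w)` of the wedge product `φ ∧ ψ` of two 1-forms at a point, normalised without
the factor `1/2`. -/
def wedge (φ ψ : H3 → ℝ) (v w : H3) : ℝ := φ v * ψ w - φ w * ψ v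

theorem wedge_swap (φ ψ : H3 → ℝ) (v w : H3) : wedge φ ψ w v = -wedge φ ψ v w := by
  simp only [wedge, neg_sub]

theorem frame_expansion (p v : H3) :
    e0' p v • E0 p + e1' p v • E1 p + e2' p v • E2 p = v := by
  ext i
  fin_cases i
  · simp [e1', E0, E1, E2]
  · simp [e2', E0, E1, E2]
  · simp only [e0', e1', e2', E0, E1, E2, Fin.reduceFinMk, Pi.add_apply, Pi.smul_apply,
      smul_eq_mul, Matrix.cons_val]
    ring

section AdaptedDerivative

variable {X Y : H3 → H3} {p : H3}

theorem fderiv_e0'_apply (hY : DifferentiableAt ℝ Y p) (v : H3) :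
    fderiv ℝ (fun q => e0' q (Y q)) p v
      = e0' p (fderiv ℝ Y p v) - wedge (e1' p) (e2' p) v (Y p) / 2 := by
  have hcoord (i : Fin 3) := hasFDerivAt_apply (𝕜 := ℝ) i p
  have hcomp (i : Fin 3) := hasFDerivAt_pi'.1 hY.hasFDerivAt i
  have hcontact : HasFDerivAt (fun q => e0' q (Y q)) _ p := (hcomp 2).add
    ((((hcoord 1).mul (hcomp 0)).sub ((hcoord 0).mul (hcomp 1))).mul_const 2⁻¹)
  rw [hcontact.fderiv]
  simp only [add_apply, sub_apply, smul_apply, smul_eq_mul, ContinuousLinearMap.comp_apply,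
    ContinuousLinearMap.proj_apply, e0', e1', e2', wedge]
  ring

theorem nablaBar_eq_fderiv_sub (X : H3 → H3) (hY : DifferentiableAt ℝ Y p) :
    nablaBar X Y p
      = fderiv ℝ Y p (X p) - (wedge (e1' p) (e2' p) (X p) (Y p) / 2) • E0 p := by
  have hcomp (i : Fin 3) : fderiv ℝ (fun q => Y q i) p (X p) = fderiv ℝ Y p (X p) i := by
    rw [fderiv_apply hY]; rfl
  have hframe := frame_expansion p (fderiv ℝ Y p (X p))
  simp only [e1', e2'] at hframe
  rw [nablaBar, fderiv_e0'_apply hY, hcomp 0, hcomp 1]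
  linear_combination (norm := module) hframe

theorem nablaBar_torsion (hX : DifferentiableAt ℝ X p) (hY : DifferentiableAt ℝ Y p) :
    nablaBar X Y p - nablaBar Y X p
      = lie X Y p - wedge (e1' p) (e2' p) (X p) (Y p) • E0 p := by
  rw [nablaBar_eq_fderiv_sub X hY, nablaBar_eq_fderiv_sub Y hX, wedge_swap _ _ (X p), lie]
  module

end AdaptedDerivative

section TangentProjection

variable (α A : H3 → ℝ) (p : H3)

theorem isLinearMap_etaStar : IsLinearMap ℝ (etaStar α A p) where
  map_add v w := by
    simp only [etaStar, e0', e1', e2', Pi.add_apply]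
    ring
  map_smul c v := by
    simp only [etaStar, e0', e1', e2', Pi.smul_apply, smul_eq_mul]
    ring

/-- The projection `v ↦ v − η*(v)·η` onto the tangent plane `ker η*` along `η`, through which the
projected covariant derivative is obtained from the adapted one. -/
def tangentProj : H3 →ₗ[ℝ] H3 :=
  LinearMap.id - ((isLinearMap_etaStar α A p).mk' _).smulRight (eta α p)

theorem tangentProj_apply (v : H3) :
    tangentProj α A p v = v - etaStar α A p v • eta α p := rfl

theorem nablaP_eq_tangentProj (X Y : H3 → H3) :
    nablaP α A X Y p = tangentProj α A p (nablaBar X Y p) := rfl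

theorem tangentProj_E0 : tangentProj α A p (E0 p) = F2 α A p := by
  have hE0 : etaStar α A p (E0 p) = -A p := by simp [etaStar, e0', e1', e2', E0]
  rw [tangentProj_apply, hE0, neg_smul, sub_neg_eq_add, F2]

variable {α A p}

theorem tangentProj_eq_self {v : H3} (hv : etaStar α A p v = 0) :
    tangentProj α A p v = v := by
  rw [tangentProj_apply, hv, zero_smul, sub_zero]

end TangentProjection

theorem wedge_e1'_e2' (α A : H3 → ℝ) (p v w : H3) :
    wedge (e1' p) (e2' p) v w
      = wedge (etaStar α A p) (f1' α p) v w - A p * wedge (f1' α p) (f2' p) v w := by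
  simp only [wedge, etaStar, f1', f2']
  linear_combination
    -(e1' p v * e2' p w - e1' p w * e2' p v) * sin_sq_add_cos_sq (α p)

theorem wedge_e1'_e2'_of_tangent {α A : H3 → ℝ} {p v w : H3}
    (hv : etaStar α A p v = 0) (hw : etaStar α A p w = 0) :
    wedge (e1' p) (e2' p) v w = -(A p * wedge (f1' α p) (f2' p) v w) := by
  have hnormal : wedge (etaStar α A p) (f1' α p) v w = 0 := by
    rw [wedge, hv, hw, zero_mul, zero_mul, sub_zero]
  rw [wedge_e1'_e2' α A, hnormal, zero_sub]

theorem nablaP_torsion_general {α A : H3 → ℝ} {X Y : H3 → H3} {p : H3}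
    (hX : DifferentiableAt ℝ X p) (hY : DifferentiableAt ℝ Y p)
    (hXtan : etaStar α A p (X p) = 0) (hYtan : etaStar α A p (Y p) = 0) :
    nablaP α A X Y p - nablaP α A Y X p - tangentProj α A p (lie X Y p)
      = (A p * wedge (f1' α p) (f2' p) (X p) (Y p)) • F2 α A p :=
  calc
    nablaP α A X Y p - nablaP α A Y X p - tangentProj α A p (lie X Y p)
    _ = tangentProj α A p (nablaBar X Y p - nablaBar Y X p - lie X Y p) := by
      simp only [nablaP_eq_tangentProj, map_sub]
    _ = tangentProj α A p ((A p * wedge (f1' α p) (f2' p) (X p) (Y p)) • E0 p) := by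
      rw [nablaBar_torsion hX hY, wedge_e1'_e2'_of_tangent hXtan hYtan, neg_smul,
        sub_neg_eq_add, add_sub_cancel_left]
    _ = (A p * wedge (f1' α p) (f2' p) (X p) (Y p)) • F2 α A p := by
      rw [map_smul, tangentProj_E0]

/-- The torsion of the projected covariant derivative on tangent fields is
`T = A·f¹∧f² ⊗ f₂`. -/
theorem nablaP_torsion (U : Set H3) (hU : IsOpen U) (α A : H3 → ℝ)
    (hα : ContDiffOn ℝ (⊤ : ℕ∞) α U) (hA : ContDiffOn ℝ (⊤ : ℕ∞) A U)
    (X Y : H3 → H3) (hX : ContDiffOn ℝ (⊤ : ℕ∞) X U) (hY : ContDiffOn ℝ (⊤ : ℕ∞) Y U)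
    (hXtan : ∀ p ∈ U, etaStar α A p (X p) = 0)
    (hYtan : ∀ p ∈ U, etaStar α A p (Y p) = 0)
    (hbtan : ∀ p ∈ U, etaStar α A p (lie X Y p) = 0) :
    ∀ p ∈ U,
      nablaP α A X Y p - nablaP α A Y X p - lie X Y p
        = (A p * (f1' α p (X p) * f2' p (Y p) - f1' α p (Y p) * f2' p (X p)))
            • F2 α A p := by
  intro p hp
  have hdiff {Z : H3 → H3} (hZ : ContDiffOn ℝ (⊤ : ℕ∞) Z U) : DifferentiableAt ℝ Z p :=
    (hZ.contDiffAt (hU.mem_nhds hp)).differentiableAt (by simp)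
  simpa only [wedge, tangentProj_eq_self (hbtan p hp)] using
    nablaP_torsion_general (hdiff hX) (hdiff hY) (hXtan p hp) (hYtan p hp)
end
end

section
/- (Gauss equation) Let X, Y, Z be smooth tangent vector fields on U (η* vanishes on each) such that [X,Y] is tangent. Then for all p ∈ U the curvature of the projected covariant derivative satisfies: ∇_X(∇_Y Z)(p) − ∇_Y(∇_X Z)(p) − ∇_{[X,Y]} Z(p) = −( V(Y,Z)(p)·dα_p(X(p)) − V(X,Z)(p)·dα_p(Y(p)) )·f₁(p), where V(X,Y) = −dα(X)·f¹(Y) + dA(X)·f²(Y) is the second fundamental form. -/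
open Real MeasureTheory

noncomputable section

/-- The pointwise second fundamental form `V_p(v,w) = −dα_p(v)·f¹_p(w) + dA_p(v)·f²_p(w)`. -/
def secondFF (α A : H3 → ℝ) (p v w : H3) : ℝ :=
  -(fderiv ℝ α p v) * f1' α p w + fderiv ℝ A p v * f2' p w

/-!
Reading vector fields in the left invariant frame turns `∇̄` into componentwise differentiation,
so `∇̄` is flat. Since `∇ = P ∇̄` for the projection `P` along `η` onto `ker η*`, and `P η = 0`,
commuting `P` past a derivative costs only the derivative of `η`:
`∇_X (P W) = P (∇̄_X W) - η*(W) P (∇̄_X η)`, where `∇̄_X η = dα(X) f₁` is already tangent.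
Taking `W = ∇̄_Y Z` and antisymmetrizing, the terms `P (∇̄_X ∇̄_Y Z)` contribute `∇_{[X,Y]} Z` by
flatness, and what remains is the Gauss equation, because differentiating `η*(Z) = 0` identifies
`η*(∇̄_Y Z)` with the second fundamental form.
-/

/-- The linear map sending a tangent vector at `p` to its components `![e⁰, e¹, e²]` in the left
invariant frame; through it, `∇̄` becomes the ordinary derivative of `ℝ³`-valued functions. -/
def coframe (p : H3) : H3 →ₗ[ℝ] Fin 3 → ℝ where
  toFun v := ![e0' p v, e1' p v, e2' p v]
  map_add' v w := by
    ext i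
    fin_cases i <;> simp [e0', e1', e2']
    ring
  map_smul' c v := by
    ext i
    fin_cases i <;> simp [e0', e1', e2']
    ring

theorem coframe_apply (p v : H3) : coframe p v = ![e0' p v, e1' p v, e2' p v] := rfl

theorem coframe_injective (p : H3) : Function.Injective (coframe p) := by
  intro v w h
  simp only [coframe_apply, e0', e1', e2', Matrix.vecCons_inj] at h
  obtain ⟨h₀, h₁, h₂, -⟩ := h
  rw [h₁, h₂] at h₀
  ext i
  fin_cases i
  exacts [h₁, h₂, add_right_cancel h₀]

theorem coframe_E0 (p : H3) : coframe p (E0 p) = ![1, 0, 0] := by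
  simp [coframe_apply, E0, e0', e1', e2']

theorem coframe_E1 (p : H3) : coframe p (E1 p) = ![0, 1, 0] := by
  simp [coframe_apply, E1, e0', e1', e2', neg_div]

theorem coframe_E2 (p : H3) : coframe p (E2 p) = ![0, 0, 1] := by
  simp [coframe_apply, E2, e0', e1', e2', neg_div]

theorem coframe_eta (α : H3 → ℝ) (p : H3) :
    coframe p (eta α p) = ![0, cos (α p), sin (α p)] := by
  simp [eta, coframe_E1, coframe_E2]

theorem coframe_F1 (α : H3 → ℝ) (p : H3) :
    coframe p (F1 α p) = ![0, -sin (α p), cos (α p)] := by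
  simp [F1, coframe_E1, coframe_E2]

theorem contDiff_coframe {n : WithTop ℕ∞} :
    ContDiff ℝ n (fun x : H3 × H3 => coframe x.1 x.2) := by
  refine contDiff_pi.2 fun i => ?_
  fin_cases i
  · change ContDiff ℝ n fun x : H3 × H3 => x.2 2 + (x.1 1 * x.2 0 - x.1 0 * x.2 1) / 2
    fun_prop
  · change ContDiff ℝ n fun x : H3 × H3 => x.2 0
    fun_prop
  · change ContDiff ℝ n fun x : H3 × H3 => x.2 1
    fun_prop

@[fun_prop]
theorem differentiable_E1 : Differentiable ℝ E1 := by
  refine differentiable_pi.2 fun i => ?_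
  fin_cases i <;> simp only [E1] <;> dsimp <;> fun_prop

@[fun_prop]
theorem differentiable_E2 : Differentiable ℝ E2 := by
  refine differentiable_pi.2 fun i => ?_
  fin_cases i <;> simp only [E2] <;> dsimp <;> fun_prop

section AdaptedDerivative

variable {X Y Z : H3 → H3} {p : H3}

theorem differentiableAt_coframe (hY : DifferentiableAt ℝ Y p) :
    DifferentiableAt ℝ (fun q => coframe q (Y q)) p :=
  DifferentiableAt.comp (g := fun x : H3 × H3 => coframe x.1 x.2) p
    (contDiff_coframe.differentiable one_ne_zero _) (differentiableAt_id.prodMk hY)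

theorem contDiffAt_coframe {n : WithTop ℕ∞} (hY : ContDiffAt ℝ n Y p) :
    ContDiffAt ℝ n (fun q => coframe q (Y q)) p :=
  ContDiffAt.comp (g := fun x : H3 × H3 => coframe x.1 x.2) p contDiff_coframe.contDiffAt
    (contDiffAt_id.prodMk hY)

theorem coframe_nablaBar (hY : DifferentiableAt ℝ Y p) :
    coframe p (nablaBar X Y p) = fderiv ℝ (fun q => coframe q (Y q)) p (X p) := by
  ext i
  have fderiv_component : fderiv ℝ (fun q => coframe q (Y q)) p (X p) i =
      fderiv ℝ (fun q => coframe q (Y q) i) p (X p) := by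
    rw [fderiv_apply (differentiableAt_coframe hY)]
    rfl
  rw [fderiv_component]
  simp only [nablaBar, map_add, map_smul, coframe_E0, coframe_E1, coframe_E2]
  fin_cases i <;> simp [coframe_apply, e1', e2']

theorem nablaBar_sub (hY : DifferentiableAt ℝ Y p) (hZ : DifferentiableAt ℝ Z p) :
    nablaBar X (fun q => Y q - Z q) p = nablaBar X Y p - nablaBar X Z p := by
  apply coframe_injective p
  rw [map_sub, coframe_nablaBar (hY.fun_sub hZ), coframe_nablaBar hY, coframe_nablaBar hZ]
  simp only [map_sub]
  rw [fderiv_fun_sub (differentiableAt_coframe hY) (differentiableAt_coframe hZ)]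
  rfl

theorem nablaBar_smul {g : H3 → ℝ} (hg : DifferentiableAt ℝ g p) (hY : DifferentiableAt ℝ Y p) :
    nablaBar X (fun q => g q • Y q) p = fderiv ℝ g p (X p) • Y p + g p • nablaBar X Y p := by
  apply coframe_injective p
  rw [map_add, map_smul, map_smul, coframe_nablaBar (hg.fun_smul hY), coframe_nablaBar hY]
  simp only [map_smul]
  rw [fderiv_fun_smul hg (differentiableAt_coframe hY)]
  simp [add_comm]

theorem differentiableAt_nablaBar (hX : DifferentiableAt ℝ X p) (hY : ContDiffAt ℝ 2 Y p) :
    DifferentiableAt ℝ (nablaBar X Y) p := by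
  have differentiableAt_component {b : H3 → ℝ} (hb : ContDiffAt ℝ 2 b p) :
      DifferentiableAt ℝ (fun q => fderiv ℝ b q (X q)) p :=
    ((hb.fderiv_right (m := 1) le_rfl).differentiableAt one_ne_zero).clm_apply hX
  have hcoframe := contDiffAt_pi.1 (contDiffAt_coframe hY)
  exact (((differentiableAt_component (hcoframe 0)).smul_const _).add
    ((differentiableAt_component (hcoframe 1)).smul (differentiable_E1 p))).add
    ((differentiableAt_component (hcoframe 2)).smul (differentiable_E2 p))

theorem nablaBar_lie (hX : DifferentiableAt ℝ X p) (hY : DifferentiableAt ℝ Y p)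
    (hZ : ContDiffAt ℝ 2 Z p) :
    nablaBar (lie X Y) Z p = nablaBar X (nablaBar Y Z) p - nablaBar Y (nablaBar X Z) p := by
  have coframe_nablaBar_nablaBar {V W : H3 → H3} (hW : DifferentiableAt ℝ W p) :
      coframe p (nablaBar V (nablaBar W Z) p) =
        fderiv ℝ (fun q => fderiv ℝ (fun r => coframe r (Z r)) q (W q)) p (V p) := by
    rw [coframe_nablaBar (differentiableAt_nablaBar hW hZ)]
    congr 1
    refine Filter.EventuallyEq.fderiv_eq ?_
    filter_upwards [hZ.eventually (by simp)] with q hq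
    exact coframe_nablaBar (hq.differentiableAt two_ne_zero)
  apply coframe_injective p
  rw [map_sub, coframe_nablaBar_nablaBar hY, coframe_nablaBar_nablaBar hX,
    coframe_nablaBar (hZ.differentiableAt two_ne_zero)]
  exact VectorField.fderiv_apply_lieBracket (contDiffAt_coframe hZ) (by simp) hY hX

end AdaptedDerivative

section TangentProjection

variable (α A : H3 → ℝ) (p : H3)

theorem etaStar_add (v w : H3) :
    etaStar α A p (v + w) = etaStar α A p v + etaStar α A p w := by
  simp only [etaStar, e0', e1', e2', Pi.add_apply]
  ring

theorem etaStar_smul (c : ℝ) (v : H3) :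
    etaStar α A p (c • v) = c * etaStar α A p v := by
  simp only [etaStar, e0', e1', e2', Pi.smul_apply, smul_eq_mul]
  ring

theorem etaStar_eq_coframe (v : H3) :
    etaStar α A p v
      = cos (α p) * coframe p v 1 + sin (α p) * coframe p v 2 - A p * coframe p v 0 := rfl

theorem etaStar_eta : etaStar α A p (eta α p) = 1 := by
  simp [etaStar_eq_coframe, coframe_eta, ← sq]

theorem etaStar_F1 : etaStar α A p (F1 α p) = 0 := by
  simp [etaStar_eq_coframe, coframe_F1, mul_comm]

/-- The projection `v ↦ v − η*(v)·η` along `η` onto the tangent plane `ker η*` at `p`, so that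
`∇_X Y` is the projection of `∇̄_X Y`. -/
def tangentProjection : H3 →ₗ[ℝ] H3 where
  toFun v := v - etaStar α A p v • eta α p
  map_add' v w := by
    rw [etaStar_add, add_smul]
    abel
  map_smul' c v := by
    rw [etaStar_smul, mul_smul, smul_sub, RingHom.id_apply]

theorem tangentProjection_apply (v : H3) :
    tangentProjection α A p v = v - etaStar α A p v • eta α p := rfl

theorem nablaP_eq_tangentProjection (X Y : H3 → H3) :
    nablaP α A X Y p = tangentProjection α A p (nablaBar X Y p) := rfl

theorem tangentProjection_eta : tangentProjection α A p (eta α p) = 0 := by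
  rw [tangentProjection_apply, etaStar_eta, one_smul, sub_self]

theorem tangentProjection_F1 : tangentProjection α A p (F1 α p) = F1 α p := by
  rw [tangentProjection_apply, etaStar_F1, zero_smul, sub_zero]

end TangentProjection

section ProjectedDerivative

variable {α A : H3 → ℝ} {X Y Z W : H3 → H3} {p : H3}

theorem differentiableAt_eta (hα : DifferentiableAt ℝ α p) : DifferentiableAt ℝ (eta α) p := by
  unfold eta
  fun_prop

theorem nablaBar_eta (hα : DifferentiableAt ℝ α p) :
    nablaBar X (eta α) p = fderiv ℝ α p (X p) • F1 α p := by
  have hasDerivAt_circle (t : ℝ) :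
      HasDerivAt (fun s => (![0, cos s, sin s] : Fin 3 → ℝ)) ![0, -sin t, cos t] t := by
    refine hasDerivAt_pi.2 fun i => ?_
    fin_cases i
    exacts [hasDerivAt_const t 0, hasDerivAt_cos t, hasDerivAt_sin t]
  have chain_rule : HasFDerivAt (fun q => ![0, cos (α q), sin (α q)]) _ p :=
    (hasDerivAt_circle (α p)).hasFDerivAt.comp p hα.hasFDerivAt
  apply coframe_injective p
  rw [coframe_nablaBar (differentiableAt_eta hα), map_smul, coframe_F1]
  simp only [coframe_eta]
  rw [chain_rule.fderiv]
  rfl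

theorem differentiableAt_etaStar (hα : DifferentiableAt ℝ α p) (hA : DifferentiableAt ℝ A p)
    (hW : DifferentiableAt ℝ W p) : DifferentiableAt ℝ (fun q => etaStar α A q (W q)) p := by
  unfold etaStar e0' e1' e2'
  fun_prop

theorem nablaP_tangentProjection (hα : DifferentiableAt ℝ α p) (hA : DifferentiableAt ℝ A p)
    (hW : DifferentiableAt ℝ W p) :
    nablaP α A X (fun q => tangentProjection α A q (W q)) p =
      nablaP α A X W p - (etaStar α A p (W p) * fderiv ℝ α p (X p)) • F1 α p := by
  have hη := differentiableAt_eta hα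
  have hν := differentiableAt_etaStar hα hA hW
  simp only [nablaP_eq_tangentProjection, tangentProjection_apply α A _ (W _)]
  rw [nablaBar_sub hW (hν.fun_smul hη), nablaBar_smul hν hη, nablaBar_eta hα, map_sub, map_add,
    map_smul, map_smul, map_smul, tangentProjection_eta, tangentProjection_F1, smul_zero, zero_add,
    smul_smul]

theorem nablaP_curvature (hα : DifferentiableAt ℝ α p) (hA : DifferentiableAt ℝ A p)
    (hX : DifferentiableAt ℝ X p) (hY : DifferentiableAt ℝ Y p) (hZ : ContDiffAt ℝ 2 Z p) :
    nablaP α A X (nablaP α A Y Z) p - nablaP α A Y (nablaP α A X Z) p - nablaP α A (lie X Y) Z p =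
      (-(etaStar α A p (nablaBar Y Z p) * fderiv ℝ α p (X p)
        - etaStar α A p (nablaBar X Z p) * fderiv ℝ α p (Y p))) • F1 α p := by
  have nablaP_lie : nablaP α A (lie X Y) Z p =
      nablaP α A X (nablaBar Y Z) p - nablaP α A Y (nablaBar X Z) p := by
    simp only [nablaP_eq_tangentProjection, nablaBar_lie hX hY hZ, map_sub]
  have nablaP_nablaP {V W : H3 → H3} (hW : DifferentiableAt ℝ W p) :
      nablaP α A V (nablaP α A W Z) p = nablaP α A V (nablaBar W Z) p
        - (etaStar α A p (nablaBar W Z p) * fderiv ℝ α p (V p)) • F1 α p :=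
    nablaP_tangentProjection hα hA (differentiableAt_nablaBar hW hZ)
  rw [nablaP_nablaP hY, nablaP_nablaP hX, nablaP_lie]
  module

theorem fderiv_etaStar (hα : DifferentiableAt ℝ α p) (hA : DifferentiableAt ℝ A p)
    (hZ : DifferentiableAt ℝ Z p) :
    fderiv ℝ (fun q => etaStar α A q (Z q)) p (X p) =
      etaStar α A p (nablaBar X Z p) - secondFF α A p (X p) (Z p) := by
  have hcoframe (i : Fin 3) : HasFDerivAt (fun q => coframe q (Z q) i) _ p :=
    hasFDerivAt_pi'.1 (differentiableAt_coframe hZ).hasFDerivAt i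
  have product_rule : HasFDerivAt (fun q => etaStar α A q (Z q)) _ p :=
    ((hα.hasFDerivAt.cos.mul (hcoframe 1)).add (hα.hasFDerivAt.sin.mul (hcoframe 2))).sub
      (hA.hasFDerivAt.mul (hcoframe 0))
  rw [product_rule.fderiv, etaStar_eq_coframe, coframe_nablaBar hZ]
  simp [secondFF, f1', f2', coframe_apply]
  ring

theorem etaStar_nablaBar_eq_secondFF (hα : DifferentiableAt ℝ α p) (hA : DifferentiableAt ℝ A p)
    (hZ : DifferentiableAt ℝ Z p) (hZtan : ∀ᶠ q in nhds p, etaStar α A q (Z q) = 0) :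
    etaStar α A p (nablaBar X Z p) = secondFF α A p (X p) (Z p) := by
  have fderiv_eq_zero : fderiv ℝ (fun q => etaStar α A q (Z q)) p = 0 :=
    (Filter.EventuallyEq.fderiv_eq hZtan).trans (fderiv_const_apply 0)
  have h := fderiv_etaStar (X := X) hα hA hZ
  rw [fderiv_eq_zero] at h
  exact sub_eq_zero.1 h.symm

end ProjectedDerivative

theorem gauss_equation_general {α A : H3 → ℝ} {X Y Z : H3 → H3} {p : H3}
    (hα : DifferentiableAt ℝ α p) (hA : DifferentiableAt ℝ A p)
    (hX : DifferentiableAt ℝ X p) (hY : DifferentiableAt ℝ Y p) (hZ : ContDiffAt ℝ 2 Z p)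
    (hZtan : ∀ᶠ q in nhds p, etaStar α A q (Z q) = 0) :
    nablaP α A X (nablaP α A Y Z) p - nablaP α A Y (nablaP α A X Z) p - nablaP α A (lie X Y) Z p =
      (-(secondFF α A p (Y p) (Z p) * fderiv ℝ α p (X p)
        - secondFF α A p (X p) (Z p) * fderiv ℝ α p (Y p))) • F1 α p := by
  have hZ₁ := hZ.differentiableAt two_ne_zero
  rw [nablaP_curvature hα hA hX hY hZ, etaStar_nablaBar_eq_secondFF hα hA hZ₁ hZtan,
    etaStar_nablaBar_eq_secondFF hα hA hZ₁ hZtan]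

/-- Gauss equation: for tangent fields `X, Y, Z` with `[X,Y]` tangent,
`R(X,Y)Z = −(V(Y,Z)·dα(X) − V(X,Z)·dα(Y))·f₁`. -/
theorem gauss_equation (U : Set H3) (hU : IsOpen U) (α A : H3 → ℝ)
    (hα : ContDiffOn ℝ (⊤ : ℕ∞) α U) (hA : ContDiffOn ℝ (⊤ : ℕ∞) A U)
    (X Y Z : H3 → H3)
    (hX : ContDiffOn ℝ (⊤ : ℕ∞) X U) (hY : ContDiffOn ℝ (⊤ : ℕ∞) Y U) (hZ : ContDiffOn ℝ (⊤ : ℕ∞) Z U)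
    (hXtan : ∀ p ∈ U, etaStar α A p (X p) = 0)
    (hYtan : ∀ p ∈ U, etaStar α A p (Y p) = 0)
    (hZtan : ∀ p ∈ U, etaStar α A p (Z p) = 0)
    (hbtan : ∀ p ∈ U, etaStar α A p (lie X Y p) = 0) :
    ∀ p ∈ U,
      nablaP α A X (fun q => nablaP α A Y Z q) p
        - nablaP α A Y (fun q => nablaP α A X Z q) p
        - nablaP α A (lie X Y) Z p
      = (-(secondFF α A p (Y p) (Z p) * fderiv ℝ α p (X p)
            - secondFF α A p (X p) (Z p) * fderiv ℝ α p (Y p))) • F1 α p := by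
  intro p hp
  have hUp : U ∈ nhds p := hU.mem_nhds hp
  have differentiableAt {F : Type} [NormedAddCommGroup F] [NormedSpace ℝ F] {f : H3 → F}
      (hf : ContDiffOn ℝ (⊤ : ℕ∞) f U) : DifferentiableAt ℝ f p :=
    (hf.contDiffAt hUp).differentiableAt (by simp)
  exact gauss_equation_general (differentiableAt hα) (differentiableAt hA) (differentiableAt hX)
    (differentiableAt hY) ((hZ.contDiffAt hUp).of_le (WithTop.coe_le_coe.2 le_top))
    (Filter.mem_of_superset hUp hZtan)
end
end
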